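/- arXiv:2009.01999 — 7 statements merged into one kernel-verified Lean document; each statement's English description precedes it below -/
import Mathlib

section
/- Let a<b be real numbers. The interval potential U_{[a,b]} satisfies the axisymmetric Laplace equation on the open half-plane H = {(ρ,z) : ρ>0}; that is, for all (ρ,z) with ρ>0, ∂²_ρ U_{[a,b]}(ρ,z) + ρ^{-1} ∂_ρ U_{[a,b]}(ρ,z) + ∂²_z U_{[a,b]}(ρ,z) = 0. (Equivalently, U_{[a,b]}, viewed as a rotationally invariant function of (x,y,z) with ρ = √(x²+y²), is harmonic on ℝ³ minus the z-axis.) -/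
/-- Interval potential of the segment `[a,b]` on the `z`-axis. -/
noncomputable def intervalPotential (a b ρ z : ℝ) : ℝ :=
  Real.log (Real.sqrt (ρ ^ 2 + (z - a) ^ 2) - (z - a)) -
    Real.log (Real.sqrt (ρ ^ 2 + (z - b) ^ 2) - (z - b))

/-!
The interval potential is the difference of two vertical translates of the half-line potential
`V = log (R - z)`, where `R = √(ρ² + z²)`. Its derivatives simplify to `ρ ∂_ρ V = 1 + z / R` and
`∂_z V = -1 / R`, so `ρ⁻¹ ∂_ρ (ρ ∂_ρ V) = -z / R³` cancels `∂_z² V = z / R³`.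
-/

/-- The Laplacian of a rotationally invariant function on `ℝ³`, in cylindrical coordinates:
`f` is the profile in the distance `ρ` to the axis and the height `z`. Meaningful for `ρ ≠ 0`
only, as `0⁻¹ = 0`. -/
noncomputable def axisymmetricLaplacian (f : ℝ → ℝ → ℝ) (ρ z : ℝ) : ℝ :=
  deriv (fun p => deriv (fun p' => f p' z) p) ρ + ρ⁻¹ * deriv (fun p => f p z) ρ
    + deriv (fun w => deriv (fun w' => f ρ w') w) z

theorem axisymmetricLaplacian_comp_sub_const (f : ℝ → ℝ → ℝ) (c ρ z : ℝ) :
    axisymmetricLaplacian (fun p w => f p (w - c)) ρ z = axisymmetricLaplacian f ρ (z - c) := by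
  simp only [axisymmetricLaplacian, deriv_comp_sub_const (f ρ),
    deriv_comp_sub_const (fun w => deriv (f ρ) w)]

theorem axisymmetricLaplacian_sub {f g : ℝ → ℝ → ℝ} {ρ z : ℝ}
    (hf : ContDiffAt ℝ 2 (Function.uncurry f) (ρ, z))
    (hg : ContDiffAt ℝ 2 (Function.uncurry g) (ρ, z)) :
    axisymmetricLaplacian (fun p w => f p w - g p w) ρ z =
      axisymmetricLaplacian f ρ z - axisymmetricLaplacian g ρ z := by
  have radial {h : ℝ → ℝ → ℝ} (hh : ContDiffAt ℝ 2 (Function.uncurry h) (ρ, z)) :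
      ContDiffAt ℝ 2 (fun p => h p z) ρ :=
    hh.comp ρ (contDiffAt_id.prodMk contDiffAt_const)
  have axial {h : ℝ → ℝ → ℝ} (hh : ContDiffAt ℝ 2 (Function.uncurry h) (ρ, z)) :
      ContDiffAt ℝ 2 (fun w => h ρ w) z :=
    hh.comp z (contDiffAt_const.prodMk contDiffAt_id)
  have radial_second := iteratedDeriv_fun_sub (radial hf) (radial hg)
  have radial_first := deriv_fun_sub ((radial hf).differentiableAt two_ne_zero)
    ((radial hg).differentiableAt two_ne_zero)
  have axial_second := iteratedDeriv_fun_sub (axial hf) (axial hg)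
  simp only [iteratedDeriv_succ, iteratedDeriv_zero] at radial_second axial_second
  simp only [axisymmetricLaplacian, radial_second, radial_first, axial_second]
  ring

theorem hasDerivAt_sqrt_sq_add_const {x c : ℝ} (h : x ^ 2 + c ≠ 0) :
    HasDerivAt (fun t => √(t ^ 2 + c)) (x / √(x ^ 2 + c)) x := by
  refine (((hasDerivAt_pow 2 x).add_const c).sqrt h).congr_deriv ?_
  rw [Nat.cast_ofNat, pow_one, mul_div_mul_left _ _ two_ne_zero]

theorem hasDerivAt_sqrt_const_add_sq {x c : ℝ} (h : c + x ^ 2 ≠ 0) :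
    HasDerivAt (fun t => √(c + t ^ 2)) (x / √(c + x ^ 2)) x := by
  simp only [add_comm c] at h ⊢
  exact hasDerivAt_sqrt_sq_add_const h

theorem sqrt_sq_add_sq_sub_pos {ρ : ℝ} (hρ : ρ ≠ 0) (z : ℝ) : 0 < √(ρ ^ 2 + z ^ 2) - z :=
  sub_pos.2 (Real.lt_sqrt_of_sq_lt (lt_add_of_pos_left _ (by positivity)))

/-- The potential of the half-line `{ρ = 0, z ≥ 0}`, normalised so that its `z`-derivative is
`-1 / √(ρ ^ 2 + z ^ 2)`. -/
noncomputable def halfLinePotential (ρ z : ℝ) : ℝ :=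
  Real.log (√(ρ ^ 2 + z ^ 2) - z)

namespace halfLinePotential

theorem contDiffAt {n : WithTop ℕ∞} {ρ : ℝ} (hρ : ρ ≠ 0) (z : ℝ) :
    ContDiffAt ℝ n (Function.uncurry halfLinePotential) (ρ, z) := by
  have hR : ρ ^ 2 + z ^ 2 ≠ 0 := by positivity
  have radius_sq : ContDiffAt ℝ n (fun q : ℝ × ℝ => q.1 ^ 2 + q.2 ^ 2) (ρ, z) := by fun_prop
  exact ((radius_sq.sqrt hR).sub contDiffAt_snd).log (sqrt_sq_add_sq_sub_pos hρ z).ne'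

theorem hasDerivAt_radial {ρ : ℝ} (hρ : ρ ≠ 0) (z : ℝ) :
    HasDerivAt (fun p => halfLinePotential p z) ((1 + z / √(ρ ^ 2 + z ^ 2)) / ρ) ρ := by
  have hR : 0 < ρ ^ 2 + z ^ 2 := by positivity
  have hR0 := (Real.sqrt_pos.2 hR).ne'
  have hRz := (sqrt_sq_add_sq_sub_pos hρ z).ne'
  have hRsq := Real.sq_sqrt hR.le
  refine (((hasDerivAt_sqrt_sq_add_const hR.ne').sub_const z).log hRz).congr_deriv ?_
  field_simp
  linear_combination -hRsq

theorem hasDerivAt_axial {ρ : ℝ} (hρ : ρ ≠ 0) (z : ℝ) :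
    HasDerivAt (halfLinePotential ρ) (-(√(ρ ^ 2 + z ^ 2))⁻¹) z := by
  have hR : 0 < ρ ^ 2 + z ^ 2 := by positivity
  have hR0 := (Real.sqrt_pos.2 hR).ne'
  have hRz := (sqrt_sq_add_sq_sub_pos hρ z).ne'
  refine (((hasDerivAt_sqrt_const_add_sq hR.ne').sub (hasDerivAt_id z)).log hRz).congr_deriv ?_
  simp only [Pi.sub_apply, id]
  field_simp
  ring

theorem deriv_deriv_radial {ρ : ℝ} (hρ : ρ ≠ 0) (z : ℝ) :
    deriv (fun p => deriv (fun p' => halfLinePotential p' z) p) ρ =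
      -(z / √(ρ ^ 2 + z ^ 2) ^ 3) - ρ⁻¹ * ((1 + z / √(ρ ^ 2 + z ^ 2)) / ρ) := by
  have hR : 0 < ρ ^ 2 + z ^ 2 := by positivity
  have hR0 := (Real.sqrt_pos.2 hR).ne'
  have first_deriv : (fun p => deriv (fun p' => halfLinePotential p' z) p) =ᶠ[nhds ρ]
      fun p => (1 + z / √(p ^ 2 + z ^ 2)) / p :=
    (eventually_ne_nhds hρ).mono fun p hp => (hasDerivAt_radial hp z).deriv
  have second_deriv := ((((hasDerivAt_const ρ z).fun_div
    (hasDerivAt_sqrt_sq_add_const hR.ne') hR0).const_add 1).fun_div (hasDerivAt_id' ρ) hρ).deriv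
  rw [first_deriv.deriv_eq, second_deriv]
  field_simp
  ring

theorem deriv_deriv_axial {ρ : ℝ} (hρ : ρ ≠ 0) (z : ℝ) :
    deriv (fun w => deriv (fun w' => halfLinePotential ρ w') w) z =
      z / √(ρ ^ 2 + z ^ 2) ^ 3 := by
  have hR : 0 < ρ ^ 2 + z ^ 2 := by positivity
  have hR0 := (Real.sqrt_pos.2 hR).ne'
  have second_deriv := ((hasDerivAt_sqrt_const_add_sq hR.ne').fun_inv hR0).fun_neg.deriv
  simp only [(hasDerivAt_axial hρ _).deriv, second_deriv]
  field_simp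

theorem axisymmetricLaplacian_eq_zero {ρ : ℝ} (hρ : ρ ≠ 0) (z : ℝ) :
    axisymmetricLaplacian halfLinePotential ρ z = 0 := by
  rw [axisymmetricLaplacian, deriv_deriv_radial hρ, (hasDerivAt_radial hρ z).deriv,
    deriv_deriv_axial hρ]
  ring

end halfLinePotential

theorem intervalPotential_axisymmetric_harmonic_general (a b : ℝ) {ρ : ℝ} (hρ : ρ ≠ 0) (z : ℝ) :
    axisymmetricLaplacian (intervalPotential a b) ρ z = 0 := by
  have smooth (c : ℝ) : ContDiffAt ℝ 2
      (Function.uncurry fun p w => halfLinePotential p (w - c)) (ρ, z) :=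
    (halfLinePotential.contDiffAt hρ (z - c)).comp (f := fun q : ℝ × ℝ => (q.1, q.2 - c)) (ρ, z)
      (contDiffAt_fst.prodMk (contDiffAt_snd.sub contDiffAt_const))
  have harmonic (c : ℝ) :
      axisymmetricLaplacian (fun p w => halfLinePotential p (w - c)) ρ z = 0 := by
    rw [axisymmetricLaplacian_comp_sub_const, halfLinePotential.axisymmetricLaplacian_eq_zero hρ]
  calc axisymmetricLaplacian (intervalPotential a b) ρ z
      = axisymmetricLaplacian (fun p w => halfLinePotential p (w - a)) ρ z
        - axisymmetricLaplacian (fun p w => halfLinePotential p (w - b)) ρ z :=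
      axisymmetricLaplacian_sub (smooth a) (smooth b)
    _ = 0 := by rw [harmonic a, harmonic b, sub_zero]

/-- The interval potential satisfies the axisymmetric Laplace equation on `{ρ > 0}`. -/
theorem intervalPotential_axisymmetric_harmonic (a b : ℝ) (hab : a < b)
    (ρ z : ℝ) (hρ : 0 < ρ) :
    deriv (fun p => deriv (fun p' => intervalPotential a b p' z) p) ρ
      + ρ⁻¹ * deriv (fun p => intervalPotential a b p z) ρ
      + deriv (fun w => deriv (fun w' => intervalPotential a b ρ w') w) z = 0 :=
  intervalPotential_axisymmetric_harmonic_general a b hρ.ne' z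
end

section
/- Let a<b be real numbers and let z₀ ∈ (a,b) be fixed. Then lim_{ρ→0⁺} ( U_{[a,b]}(ρ,z₀) − 2 log ρ ) = − log(2(z₀−a)) − log(2(b−z₀)). In particular U_{[a,b]} ∼ 2 log ρ near the interior of the segment I=[a,b] of the z-axis. -/
open Filter Topology

/-! At an interior point `z` of the segment only `√(ρ ^ 2 + (z - a) ^ 2) - (z - a)` degenerates as
`ρ → 0`. Multiplying by its conjugate gives `ρ ^ 2`, which accounts for the singular part
`2 * log ρ`; what remains is continuous at `ρ = 0`. -/

theorem sqrt_sq_add_sq_sub_mul_add (ρ x : ℝ) :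
    (√(ρ ^ 2 + x ^ 2) - x) * (√(ρ ^ 2 + x ^ 2) + x) = ρ ^ 2 := by
  linear_combination Real.sq_sqrt (show 0 ≤ ρ ^ 2 + x ^ 2 by positivity)

theorem log_sqrt_sq_add_sq_sub {ρ : ℝ} (hρ : ρ ≠ 0) (x : ℝ) :
    Real.log (√(ρ ^ 2 + x ^ 2) - x) = 2 * Real.log ρ - Real.log (√(ρ ^ 2 + x ^ 2) + x) := by
  have hmul := sqrt_sq_add_sq_sub_mul_add ρ x
  obtain ⟨hsub, hadd⟩ := mul_ne_zero_iff.mp (hmul.trans_ne (pow_ne_zero 2 hρ))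
  rw [eq_sub_iff_add_eq, ← Real.log_mul hsub hadd, hmul, Real.log_pow, Nat.cast_ofNat]

theorem intervalPotential_sub_two_mul_log (a b z : ℝ) {ρ : ℝ} (hρ : ρ ≠ 0) :
    intervalPotential a b ρ z - 2 * Real.log ρ =
      -Real.log (√(ρ ^ 2 + (z - a) ^ 2) + (z - a)) -
        Real.log (√(ρ ^ 2 + (b - z) ^ 2) + (b - z)) := by
  rw [intervalPotential, log_sqrt_sq_add_sq_sub hρ, sub_sq_comm z b, ← neg_sub b z, sub_neg_eq_add]
  ring

theorem tendsto_log_sqrt_sq_add_sq_add {x : ℝ} (hx : 0 < x) :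
    Tendsto (fun ρ => Real.log (√(ρ ^ 2 + x ^ 2) + x)) (𝓝 0) (𝓝 (Real.log (2 * x))) := by
  have hzero : √(0 ^ 2 + x ^ 2) + x = 2 * x := by
    rw [zero_pow two_ne_zero, zero_add, Real.sqrt_sq hx.le, two_mul]
  have hcont : Continuous fun ρ : ℝ => √(ρ ^ 2 + x ^ 2) + x := by fun_prop
  exact (hcont.tendsto' 0 (2 * x) hzero).log (by positivity)

/-- Near an interior point of the segment, `U_{[a,b]} ∼ 2 log ρ` with explicit constant. -/
theorem intervalPotential_axis_asymptotics (a b z₀ : ℝ) (hab : a < b)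
    (hz₀ : z₀ ∈ Set.Ioo a b) :
    Tendsto (fun ρ => intervalPotential a b ρ z₀ - 2 * Real.log ρ)
      (𝓝[>] (0 : ℝ))
      (𝓝 (-Real.log (2 * (z₀ - a)) - Real.log (2 * (b - z₀)))) := by
  have hlower := tendsto_log_sqrt_sq_add_sq_add (sub_pos.mpr hz₀.1)
  have hupper := tendsto_log_sqrt_sq_add_sq_add (sub_pos.mpr hz₀.2)
  refine ((hlower.neg.sub hupper).mono_left nhdsWithin_le_nhds).congr' ?_
  filter_upwards [self_mem_nhdsWithin] with ρ hρ
  exact (intervalPotential_sub_two_mul_log a b z₀ (ne_of_gt hρ)).symm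
end

section
/- Let a<b be real numbers. There exist constants C₀>0 and R>0 such that for all (ρ,z) with ρ>0 and r := √(ρ²+z²) ≥ R, one has | U_{[a,b]}(ρ,z) − (a−b)/r | ≤ C₀ / r². That is, U_{[a,b]} = (a−b)/r + O(r^{-2}) as r → ∞, uniformly on the open half-plane {ρ>0}. -/
/-!
Up to sign, `U_{[a,b]}` is the Newtonian potential of a uniformly charged rod:
`U_{[a,b]}(ρ, z) = -∫ c in a..b, 1 / s(c)`, where `s(c)` is the distance from `(ρ, z)` to the
point `c` of the axis. By the reverse triangle inequality `|s(c) - r| ≤ |c|`, so replacing each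
`1 / s(c)` by `1 / r` costs only `O(r⁻²)`.
-/

theorem abs_inv_sub_inv_le_of_two_mul_le {𝕜 : Type*} [Field 𝕜] [LinearOrder 𝕜]
    [IsStrictOrderedRing 𝕜] {r s M : 𝕜} (hr : 0 < r) (hMr : 2 * M ≤ r) (hs : |s - r| ≤ M) :
    |r⁻¹ - s⁻¹| ≤ 2 * M / r ^ 2 := by
  have half_le : r / 2 ≤ s := by linarith [(abs_le.mp hs).1]
  have s_pos : 0 < s := (half_pos hr).trans_le half_le
  calc |r⁻¹ - s⁻¹| = |s - r| / (r * s) := by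
        rw [inv_sub_inv hr.ne' s_pos.ne', abs_div, abs_of_pos (mul_pos hr s_pos)]
    _ ≤ M / (r * (r / 2)) := by gcongr; exact (abs_nonneg _).trans hs
    _ = 2 * M / r ^ 2 := by field_simp

theorem abs_sqrt_sq_add_sq_sub_sqrt_sq_add_sq_le (ρ x y : ℝ) :
    |√(ρ ^ 2 + x ^ 2) - √(ρ ^ 2 + y ^ 2)| ≤ |x - y| := by
  simpa [Complex.norm_eq_sqrt_sq_add_sq, Real.sqrt_sq_eq_abs] using
    abs_norm_sub_norm_le (⟨ρ, x⟩ : ℂ) ⟨ρ, y⟩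

section

variable {ρ : ℝ}

theorem sqrt_sq_add_sq_pos (hρ : ρ ≠ 0) (x : ℝ) : 0 < √(ρ ^ 2 + x ^ 2) := by
  positivity

theorem lt_sqrt_sq_add_sq (hρ : ρ ≠ 0) (x : ℝ) : x < √(ρ ^ 2 + x ^ 2) :=
  Real.lt_sqrt_of_sq_lt (lt_add_of_pos_left _ (by positivity))

theorem hasDerivAt_log_sqrt_sq_add_sq_sub (hρ : ρ ≠ 0) (x : ℝ) :
    HasDerivAt (fun t ↦ Real.log (√(ρ ^ 2 + t ^ 2) - t)) (-(√(ρ ^ 2 + x ^ 2))⁻¹) x := by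
  have diff_ne : √(ρ ^ 2 + x ^ 2) - x ≠ 0 := (sub_pos.mpr (lt_sqrt_sq_add_sq hρ x)).ne'
  have hasDerivAt_sqrt :
      HasDerivAt (fun t ↦ √(ρ ^ 2 + t ^ 2)) (x / √(ρ ^ 2 + x ^ 2)) x := by
    convert ((hasDerivAt_pow 2 x).const_add (ρ ^ 2)).sqrt (by positivity) using 1
    field_simp
    norm_num [mul_comm]
  refine ((hasDerivAt_sqrt.fun_sub (hasDerivAt_id' x)).log diff_ne).congr_deriv ?_
  rw [div_eq_iff diff_ne]
  field_simp
  ring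

theorem continuous_inv_sqrt_sq_add_sub_sq (hρ : ρ ≠ 0) (z : ℝ) :
    Continuous fun c ↦ (√(ρ ^ 2 + (z - c) ^ 2))⁻¹ :=
  Continuous.inv₀ (by fun_prop) fun c ↦ (sqrt_sq_add_sq_pos hρ (z - c)).ne'

theorem intervalPotential_eq_neg_integral (a b : ℝ) (hρ : ρ ≠ 0) (z : ℝ) :
    intervalPotential a b ρ z = -∫ c in a..b, (√(ρ ^ 2 + (z - c) ^ 2))⁻¹ := by
  have hasDerivAt_primitive (c : ℝ) :
      HasDerivAt (fun c ↦ Real.log (√(ρ ^ 2 + (z - c) ^ 2) - (z - c)))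
        (√(ρ ^ 2 + (z - c) ^ 2))⁻¹ c := by
    simpa using (hasDerivAt_log_sqrt_sq_add_sq_sub hρ (z - c)).comp_const_sub z c
  rw [intervalIntegral.integral_eq_sub_of_hasDerivAt (fun c _ ↦ hasDerivAt_primitive c)
    ((continuous_inv_sqrt_sq_add_sub_sq hρ z).intervalIntegrable a b), neg_sub]
  rfl

theorem intervalPotential_sub_div_eq_integral (a b : ℝ) (hρ : ρ ≠ 0) (z r : ℝ) :
    intervalPotential a b ρ z - (a - b) / r =
      ∫ c in a..b, (r⁻¹ - (√(ρ ^ 2 + (z - c) ^ 2))⁻¹) := by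
  rw [intervalIntegral.integral_sub intervalIntegrable_const
      ((continuous_inv_sqrt_sq_add_sub_sq hρ z).intervalIntegrable a b),
    intervalIntegral.integral_const, intervalPotential_eq_neg_integral a b hρ z, smul_eq_mul]
  ring

theorem intervalPotential_infinity_asymptotics_general {a b z M : ℝ} (ha : |a| ≤ M) (hb : |b| ≤ M)
    (hρ : ρ ≠ 0) (hM : 2 * M ≤ √(ρ ^ 2 + z ^ 2)) :
    |intervalPotential a b ρ z - (a - b) / √(ρ ^ 2 + z ^ 2)| ≤
      2 * M * |b - a| / √(ρ ^ 2 + z ^ 2) ^ 2 := by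
  have integrand_le : ∀ c ∈ Set.uIoc a b,
      ‖(√(ρ ^ 2 + z ^ 2))⁻¹ - (√(ρ ^ 2 + (z - c) ^ 2))⁻¹‖ ≤ 2 * M / √(ρ ^ 2 + z ^ 2) ^ 2 := by
    intro c hc
    have abs_c_le : |c| ≤ M :=
      abs_le.mpr (Set.uIcc_subset_Icc (abs_le.mp ha) (abs_le.mp hb) (Set.uIoc_subset_uIcc hc))
    have dist_le : |√(ρ ^ 2 + (z - c) ^ 2) - √(ρ ^ 2 + z ^ 2)| ≤ |c| := by
      simpa using abs_sqrt_sq_add_sq_sub_sqrt_sq_add_sq_le ρ (z - c) z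
    exact abs_inv_sub_inv_le_of_two_mul_le (sqrt_sq_add_sq_pos hρ z) hM (dist_le.trans abs_c_le)
  rw [intervalPotential_sub_div_eq_integral a b hρ, mul_div_right_comm]
  exact intervalIntegral.norm_integral_le_of_norm_le_const integrand_le

end

/-- `U_{[a,b]} = (a−b)/r + O(r⁻²)` as `r → ∞`, uniformly on the half-plane `{ρ > 0}`. -/
theorem intervalPotential_infinity_asymptotics (a b : ℝ) (hab : a < b) :
    ∃ C₀ > (0 : ℝ), ∃ R > (0 : ℝ), ∀ ρ z : ℝ, 0 < ρ →
      R ≤ Real.sqrt (ρ ^ 2 + z ^ 2) →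
      |intervalPotential a b ρ z - (a - b) / Real.sqrt (ρ ^ 2 + z ^ 2)| ≤
        C₀ / (Real.sqrt (ρ ^ 2 + z ^ 2)) ^ 2 := by
  have length_pos : 0 < |b - a| := abs_pos.mpr (sub_pos.mpr hab).ne'
  exact ⟨2 * (|a| + |b| + 1) * |b - a|, mul_pos (by positivity) length_pos,
    2 * (|a| + |b| + 1), by positivity,
    fun ρ z hρ hR ↦ intervalPotential_infinity_asymptotics_general
      (by linarith [abs_nonneg b]) (by linarith [abs_nonneg a]) hρ.ne' hR⟩
end

section
/- Let 0<m<L, and for each integer j let Γ_j = [(2j−2)L+m, 2jL−m]. Then for every (ρ,z) with ρ>0, the renormalized sequence S_n(ρ,z) = Σ_{j=−n}^{n} U_{Γ_j}(ρ,z) + 2(1 − m/L) log n (n ≥ 1) converges to a finite limit u(ρ,z) as n → ∞. -/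
open Filter Topology

/-!
Since `√(ρ² + v²) + v = 2v (1 + O(v⁻²))`, a rod `[x + a, x + b]` has potential
`-(b - a) / x + O(x⁻²)` as `x → +∞`, and the reflection `z ↦ -z` gives `-(b - a) / |x| + O(x⁻²)`
as `x → -∞`. For a periodic array of rods the remainders are therefore absolutely summable, while
the principal parts add up to a multiple of `2 Hₙ = 2 log n + 2γ + o(1)`.
-/

open Asymptotics

section LogAsymptotics

lemma isBigO_log_one_add_sub_self :
    (fun t : ℝ => Real.log (1 + t) - t) =O[𝓝 0] fun t => t ^ 2 := by
  refine .of_bound 2 ?_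
  filter_upwards [Metric.ball_mem_nhds (0 : ℝ) one_half_pos] with t ht
  have ht' : |t| < 1 / 2 := by simpa using ht
  have htaylor : |-t + Real.log (1 + t)| ≤ |t| ^ 2 / (1 - |t|) := by
    simpa using Real.abs_log_sub_add_sum_range_le (x := -t) (by rw [abs_neg]; linarith) 1
  calc ‖Real.log (1 + t) - t‖ = |-t + Real.log (1 + t)| := by
        rw [Real.norm_eq_abs, sub_eq_neg_add]
    _ ≤ |t| ^ 2 / (1 - |t|) := htaylor
    _ ≤ |t| ^ 2 / (1 / 2) := by gcongr; linarith
    _ = 2 * ‖t ^ 2‖ := by rw [norm_pow, Real.norm_eq_abs]; ring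

lemma isBigO_log_add_sub_log_sub_div (c : ℝ) :
    (fun x : ℝ => Real.log (x + c) - Real.log x - c / x) =O[atTop] fun x => (x ^ 2)⁻¹ := by
  have hlim : Tendsto (fun x : ℝ => c / x) atTop (𝓝 0) := tendsto_const_nhds.div_atTop tendsto_id
  have hbound : (fun x : ℝ => Real.log (1 + c / x) - c / x) =O[atTop] fun x => (c / x) ^ 2 :=
    isBigO_log_one_add_sub_self.comp_tendsto hlim
  have hsq : (fun x : ℝ => (c / x) ^ 2) =O[atTop] fun x => (x ^ 2)⁻¹ := by
    simpa only [div_eq_mul_inv, mul_pow, inv_pow] using isBigO_const_mul_self (c ^ 2) _ _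
  refine (hbound.trans hsq).congr' ?_ .rfl
  filter_upwards [eventually_gt_atTop 0, eventually_gt_atTop (-c)] with x hx hxc
  rw [one_add_div hx.ne', Real.log_div (by linarith) hx.ne']

lemma isBigO_inv_add_sq (c : ℝ) :
    (fun x : ℝ => ((x + c) ^ 2)⁻¹) =O[atTop] fun x => (x ^ 2)⁻¹ := by
  have hlin : (fun x : ℝ => x) =O[atTop] fun x => x + c := by
    refine .of_bound 2 ?_
    filter_upwards [eventually_ge_atTop 0, eventually_ge_atTop (-2 * c)] with x hx hxc
    rw [Real.norm_of_nonneg hx, Real.norm_of_nonneg (by linarith)]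
    linarith
  refine (hlin.pow 2).inv_rev ?_
  filter_upwards [eventually_ne_atTop 0] with x hx hx'
  exact absurd hx' (pow_ne_zero 2 hx)

lemma isBigO_log_sqrt_sq_add_sq_add_sub_log (ρ : ℝ) :
    (fun v : ℝ => Real.log (√(ρ ^ 2 + v ^ 2) + v) - Real.log (2 * v)) =O[atTop]
      fun v => (v ^ 2)⁻¹ := by
  refine .of_bound (ρ ^ 2 / 4) ?_
  filter_upwards [eventually_gt_atTop 0] with v hv
  have hlower : v ≤ √(ρ ^ 2 + v ^ 2) := Real.le_sqrt_of_sq_le (by nlinarith [sq_nonneg ρ])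
  have hupper : √(ρ ^ 2 + v ^ 2) ≤ v + ρ ^ 2 / (2 * v) := by
    refine Real.sqrt_le_iff.2 ⟨by positivity, ?_⟩
    have hsq : (v + ρ ^ 2 / (2 * v)) ^ 2 = ρ ^ 2 + v ^ 2 + (ρ ^ 2 / (2 * v)) ^ 2 := by
      field_simp
      ring
    linarith [sq_nonneg (ρ ^ 2 / (2 * v))]
  have hlog_nonneg : 0 ≤ Real.log (√(ρ ^ 2 + v ^ 2) + v) - Real.log (2 * v) :=
    sub_nonneg.2 (Real.log_le_log (by positivity) (by linarith))
  rw [Real.norm_of_nonneg hlog_nonneg, Real.norm_of_nonneg (by positivity)]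
  calc Real.log (√(ρ ^ 2 + v ^ 2) + v) - Real.log (2 * v)
      = Real.log ((√(ρ ^ 2 + v ^ 2) + v) / (2 * v)) :=
        (Real.log_div (by positivity) (by positivity)).symm
    _ ≤ (√(ρ ^ 2 + v ^ 2) + v) / (2 * v) - 1 := Real.log_le_sub_one_of_pos (by positivity)
    _ ≤ (v + ρ ^ 2 / (2 * v) + v) / (2 * v) - 1 := by gcongr
    _ = ρ ^ 2 / 4 * (v ^ 2)⁻¹ := by field_simp; ring

lemma isBigO_log_sqrt_sq_add_add_sq_add_sub_log_sub_div (ρ c : ℝ) :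
    (fun x : ℝ => Real.log (√(ρ ^ 2 + (x + c) ^ 2) + (x + c)) - Real.log (2 * x) - c / x)
      =O[atTop] fun x => (x ^ 2)⁻¹ := by
  have hsqrt := ((isBigO_log_sqrt_sq_add_sq_add_sub_log ρ).comp_tendsto
    (tendsto_atTop_add_const_right atTop c tendsto_id)).trans (isBigO_inv_add_sq c)
  refine (hsqrt.add (isBigO_log_add_sub_log_sub_div c)).congr' ?_ .rfl
  filter_upwards [eventually_gt_atTop 0, eventually_gt_atTop (-c)] with x hx hxc
  have hxc' : x + c ≠ 0 := by linarith
  simp only [Function.comp_apply, id_eq]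
  rw [Real.log_mul two_ne_zero hxc', Real.log_mul two_ne_zero hx.ne']
  ring

end LogAsymptotics

section IntervalPotential

lemma intervalPotential_neg_neg {ρ : ℝ} (hρ : ρ ≠ 0) (a b z : ℝ) :
    intervalPotential (-b) (-a) ρ (-z) = intervalPotential a b ρ z := by
  have log_add_log (w : ℝ) :
      Real.log (√(ρ ^ 2 + w ^ 2) - w) + Real.log (√(ρ ^ 2 + w ^ 2) + w) = Real.log (ρ ^ 2) := by
    have hprod : (√(ρ ^ 2 + w ^ 2) - w) * (√(ρ ^ 2 + w ^ 2) + w) = ρ ^ 2 := by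
      linear_combination Real.sq_sqrt (show 0 ≤ ρ ^ 2 + w ^ 2 by positivity)
    have hne := hprod ▸ pow_ne_zero 2 hρ
    rw [← Real.log_mul (left_ne_zero_of_mul hne) (right_ne_zero_of_mul hne), hprod]
  have hneg (t : ℝ) : -z - -t = -(z - t) := by ring
  simp only [intervalPotential, hneg, neg_sq, sub_neg_eq_add]
  linarith [log_add_log (z - a), log_add_log (z - b)]

lemma isBigO_intervalPotential_add_div (a b ρ z : ℝ) :
    (fun x => intervalPotential (x + a) (x + b) ρ z + (b - a) / x) =O[atTop]
      fun x => (x ^ 2)⁻¹ := by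
  refine ((isBigO_log_sqrt_sq_add_add_sq_add_sub_log_sub_div ρ (a - z)).sub
    (isBigO_log_sqrt_sq_add_add_sq_add_sub_log_sub_div ρ (b - z))).congr_left fun x => ?_
  have hneg (t : ℝ) : z - (x + t) = -(x + (t - z)) := by ring
  simp only [intervalPotential, hneg, neg_sq, sub_neg_eq_add]
  ring

lemma summable_nat_intervalPotential_add_div {p : ℝ} (hp : 0 < p) (a b ρ z : ℝ) :
    Summable fun n : ℕ => intervalPotential (p * n + a) (p * n + b) ρ z + (b - a) / (p * n) := by
  have hsq : Summable fun n : ℕ => ((p * n) ^ 2)⁻¹ := by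
    simpa only [mul_pow, mul_inv] using
      (Real.summable_nat_pow_inv.2 one_lt_two).mul_left (p ^ 2)⁻¹
  exact summable_of_isBigO_nat hsq ((isBigO_intervalPotential_add_div a b ρ z).comp_tendsto
    (tendsto_natCast_atTop_atTop.const_mul_atTop hp))

lemma summable_int_intervalPotential_add_div_abs {p ρ : ℝ} (hp : 0 < p) (hρ : ρ ≠ 0)
    (a b z : ℝ) :
    Summable fun j : ℤ =>
      intervalPotential (p * j + a) (p * j + b) ρ z + (b - a) / (p * |(j : ℝ)|) := by
  refine .of_nat_of_neg ?_ ?_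
  · simpa using summable_nat_intervalPotential_add_div hp a b ρ z
  · refine (summable_nat_intervalPotential_add_div hp (-b) (-a) ρ (-z)).congr fun n => ?_
    rw [← intervalPotential_neg_neg hρ]
    push_cast
    rw [abs_neg, Nat.abs_cast]
    ring_nf

end IntervalPotential

section SymmetricSums

lemma tendsto_sum_Icc_inv_abs_sub_log :
    Tendsto (fun n : ℕ => ∑ j ∈ Finset.Icc (-(n : ℤ)) n, |(j : ℝ)|⁻¹ - 2 * Real.log n)
      atTop (𝓝 (2 * Real.eulerMascheroniConstant)) := by
  refine (Real.tendsto_harmonic_sub_log.const_mul 2).congr fun n => ?_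
  have heven : Function.Even fun j : ℤ => |(j : ℝ)|⁻¹ := fun j => by simp
  rw [Finset.sum_Icc_of_even_eq_range heven, Finset.sum_range_succ']
  simp [harmonic, mul_sub, abs_of_nonneg, add_nonneg]

lemma tendsto_sum_Icc_sub_mul_log {f : ℤ → ℝ} {c : ℝ}
    (hf : Summable fun j : ℤ => f j - c * |(j : ℝ)|⁻¹) :
    Tendsto (fun n : ℕ => ∑ j ∈ Finset.Icc (-(n : ℤ)) n, f j - 2 * c * Real.log n) atTop
      (𝓝 (∑' j : ℤ, (f j - c * |(j : ℝ)|⁻¹) + c * (2 * Real.eulerMascheroniConstant))) := by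
  have hremainder := hf.hasSum.comp (Finset.tendsto_Icc_neg (R := ℤ))
  refine (hremainder.add (tendsto_sum_Icc_inv_abs_sub_log.const_mul c)).congr fun n => ?_
  simp only [Function.comp_apply, Finset.sum_sub_distrib, ← Finset.mul_sum]
  ring

end SymmetricSums

theorem blackRings_renormalized_sum_converges_general {p ρ : ℝ} (hp : 0 < p) (hρ : ρ ≠ 0)
    (a b z : ℝ) :
    ∃ u : ℝ, Tendsto
      (fun n : ℕ =>
        (∑ j ∈ Finset.Icc (-(n : ℤ)) (n : ℤ), intervalPotential (p * j + a) (p * j + b) ρ z)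
          + 2 * ((b - a) / p) * Real.log n)
      atTop (𝓝 u) := by
  have hsum : Summable fun j : ℤ =>
      intervalPotential (p * j + a) (p * j + b) ρ z - -((b - a) / p) * |(j : ℝ)|⁻¹ := by
    refine (summable_int_intervalPotential_add_div_abs hp hρ a b z).congr fun j => ?_
    rw [neg_mul, sub_neg_eq_add, ← div_eq_mul_inv, div_div]
  exact ⟨_, (tendsto_sum_Icc_sub_mul_log hsum).congr fun n => by ring⟩

/-- Convergence of the renormalized sum of rod potentials for the string of black rings:
the rods are `Γ_j = [(2j−2)L+m, 2jL−m]` and the renormalization term is `2(1−m/L) log n`. -/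
theorem blackRings_renormalized_sum_converges (L m : ℝ) (hm : 0 < m) (hmL : m < L)
    (ρ z : ℝ) (hρ : 0 < ρ) :
    ∃ u : ℝ, Tendsto
      (fun n : ℕ =>
        (∑ j ∈ Finset.Icc (-(n : ℤ)) (n : ℤ),
          intervalPotential ((2 * (j : ℝ) - 2) * L + m) (2 * (j : ℝ) * L - m) ρ z)
          + 2 * (1 - m / L) * Real.log n)
      atTop (𝓝 u) := by
  have hL : 0 < L := hm.trans hmL
  have hdensity : (-m - (m - 2 * L)) / (2 * L) = 1 - m / L := by field_simp; ring
  have hleft (j : ℤ) : 2 * L * (j : ℝ) + (m - 2 * L) = (2 * j - 2) * L + m := by ring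
  have hright (j : ℤ) : 2 * L * (j : ℝ) + -m = 2 * j * L - m := by ring
  simpa only [hleft, hright, hdensity] using
    blackRings_renormalized_sum_converges_general (mul_pos two_pos hL) hρ.ne' (m - 2 * L) (-m) z
end

section
/- Let Ω be an open subset of the half-plane H = {(ρ,z) : ρ>0} and let u, v be smooth functions on Ω each satisfying the axisymmetric Laplace equation ∂²_ρ w + ρ^{-1} ∂_ρ w + ∂²_z w = 0. Define P and Q on Ω by P = (ρ/4)[ (∂_ρu)² − (∂_zu)² + (∂_ρv)² − (∂_zv)² + ∂_ρu ∂_ρv − ∂_zu ∂_zv ] − (1/2)(∂_ρu + ∂_ρv) and Q = (ρ/4)[ 2 ∂_ρu ∂_zu + 2 ∂_ρv ∂_zv + ∂_ρu ∂_zv + ∂_zu ∂_ρv ] − (1/2)(∂_zu + ∂_zv). Then the 1-form P dρ + Q dz is closed on Ω: ∂_z P = ∂_ρ Q everywhere on Ω. -/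
open Filter Topology

/-!
Polarise the quadratic part of `P dρ + Q dz`: it is a combination of the 1-forms
`ρ (u_ρ v_ρ - u_z v_z) dρ + ρ (u_ρ v_z + u_z v_ρ) dz`. Since mixed partials commute, all terms
with a mixed partial cancel in the exterior derivative of such a form, and what remains is a
combination of `(ρ u_ρ)_ρ + ρ u_zz` and `(ρ v_ρ)_ρ + ρ v_zz`, which vanish for axisymmetric
harmonic functions. The linear part of `P dρ + Q dz` is exact.
-/

open Function (uncurry)

section PartialDerivatives

variable {𝕜 E : Type*} [NontriviallyNormedField 𝕜] [NormedAddCommGroup E] [NormedSpace 𝕜 E]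
  {w : 𝕜 → 𝕜 → E} {x y : 𝕜}

/-- The partial derivative of a curried function of two variables in its first variable. As for
`deriv`, the value is `0` where it does not exist. -/
noncomputable def partialFst (w : 𝕜 → 𝕜 → E) (x y : 𝕜) : E :=
  deriv (fun s => w s y) x

/-- The partial derivative of a curried function of two variables in its second variable. As for
`deriv`, the value is `0` where it does not exist. -/
noncomputable def partialSnd (w : 𝕜 → 𝕜 → E) (x y : 𝕜) : E :=
  deriv (fun t => w x t) y

theorem hasDerivAt_slice_fst {w' : 𝕜 × 𝕜 →L[𝕜] E} (h : HasFDerivAt (uncurry w) w' (x, y)) :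
    HasDerivAt (fun s => w s y) (w' (1, 0)) x :=
  HasFDerivAt.comp_hasDerivAt (f := fun s => (s, y)) x h
    ((hasDerivAt_id x).prodMk (hasDerivAt_const x y))

theorem hasDerivAt_slice_snd {w' : 𝕜 × 𝕜 →L[𝕜] E} (h : HasFDerivAt (uncurry w) w' (x, y)) :
    HasDerivAt (fun t => w x t) (w' (0, 1)) y :=
  HasFDerivAt.comp_hasDerivAt (f := fun t => (x, t)) y h
    ((hasDerivAt_const y x).prodMk (hasDerivAt_id y))

theorem hasDerivAt_partialFst (h : DifferentiableAt 𝕜 (uncurry w) (x, y)) :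
    HasDerivAt (fun s => w s y) (partialFst w x y) x :=
  (hasDerivAt_slice_fst h.hasFDerivAt).differentiableAt.hasDerivAt

theorem hasDerivAt_partialSnd (h : DifferentiableAt 𝕜 (uncurry w) (x, y)) :
    HasDerivAt (fun t => w x t) (partialSnd w x y) y :=
  (hasDerivAt_slice_snd h.hasFDerivAt).differentiableAt.hasDerivAt

theorem partialFst_eq_fderiv_apply (h : DifferentiableAt 𝕜 (uncurry w) (x, y)) :
    partialFst w x y = fderiv 𝕜 (uncurry w) (x, y) (1, 0) :=
  (hasDerivAt_slice_fst h.hasFDerivAt).deriv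

theorem partialSnd_eq_fderiv_apply (h : DifferentiableAt 𝕜 (uncurry w) (x, y)) :
    partialSnd w x y = fderiv 𝕜 (uncurry w) (x, y) (0, 1) :=
  (hasDerivAt_slice_snd h.hasFDerivAt).deriv

theorem uncurry_partialFst_eventuallyEq (hw : ContDiffAt 𝕜 1 (uncurry w) (x, y)) :
    uncurry (partialFst w) =ᶠ[𝓝 (x, y)] fun q => fderiv 𝕜 (uncurry w) q (1, 0) :=
  (hw.eventually (by simp)).mono fun _ hq =>
    partialFst_eq_fderiv_apply (hq.differentiableAt one_ne_zero)

theorem uncurry_partialSnd_eventuallyEq (hw : ContDiffAt 𝕜 1 (uncurry w) (x, y)) :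
    uncurry (partialSnd w) =ᶠ[𝓝 (x, y)] fun q => fderiv 𝕜 (uncurry w) q (0, 1) :=
  (hw.eventually (by simp)).mono fun _ hq =>
    partialSnd_eq_fderiv_apply (hq.differentiableAt one_ne_zero)

theorem hasFDerivAt_fderiv_apply {F : Type*} [NormedAddCommGroup F] [NormedSpace 𝕜 F]
    {f : F → E} {p : F} (hf : ContDiffAt 𝕜 2 f p) (c : F) :
    HasFDerivAt (fun q => fderiv 𝕜 f q c) ((fderiv 𝕜 (fderiv 𝕜 f) p).flip c) p := by
  have hfderiv : DifferentiableAt 𝕜 (fderiv 𝕜 f) p :=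
    (hf.fderiv_right (m := 1) (by norm_num)).differentiableAt one_ne_zero
  exact (ContinuousLinearMap.apply 𝕜 E c).hasFDerivAt.comp p hfderiv.hasFDerivAt

theorem hasFDerivAt_uncurry_partialFst (hw : ContDiffAt 𝕜 2 (uncurry w) (x, y)) :
    HasFDerivAt (uncurry (partialFst w))
      ((fderiv 𝕜 (fderiv 𝕜 (uncurry w)) (x, y)).flip (1, 0)) (x, y) :=
  (hasFDerivAt_fderiv_apply hw (1, 0)).congr_of_eventuallyEq <|
    uncurry_partialFst_eventuallyEq (hw.of_le one_le_two)

theorem hasFDerivAt_uncurry_partialSnd (hw : ContDiffAt 𝕜 2 (uncurry w) (x, y)) :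
    HasFDerivAt (uncurry (partialSnd w))
      ((fderiv 𝕜 (fderiv 𝕜 (uncurry w)) (x, y)).flip (0, 1)) (x, y) :=
  (hasFDerivAt_fderiv_apply hw (0, 1)).congr_of_eventuallyEq <|
    uncurry_partialSnd_eventuallyEq (hw.of_le one_le_two)

theorem partialSnd_partialFst_comm
    (hw : ContDiffAt 𝕜 (minSmoothness 𝕜 2) (uncurry w) (x, y)) :
    partialSnd (partialFst w) x y = partialFst (partialSnd w) x y := by
  have hw₂ : ContDiffAt 𝕜 2 (uncurry w) (x, y) := hw.of_le le_minSmoothness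
  calc
    partialSnd (partialFst w) x y = fderiv 𝕜 (fderiv 𝕜 (uncurry w)) (x, y) (0, 1) (1, 0) :=
      (hasDerivAt_slice_snd (hasFDerivAt_uncurry_partialFst hw₂)).deriv
    _ = fderiv 𝕜 (fderiv 𝕜 (uncurry w)) (x, y) (1, 0) (0, 1) :=
      hw.isSymmSndFDerivAt le_rfl (0, 1) (1, 0)
    _ = partialFst (partialSnd w) x y :=
      (hasDerivAt_slice_fst (hasFDerivAt_uncurry_partialSnd hw₂)).deriv.symm

end PartialDerivatives

section Quadrature

variable {𝕜 : Type*} [NontriviallyNormedField 𝕜] {u v w : 𝕜 → 𝕜 → 𝕜} {ρ z : 𝕜}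

/-- The axisymmetric Laplacian multiplied by `ρ`, that is `(ρ w_ρ)_ρ + ρ w_zz`. The weight makes
it meaningful on the axis `ρ = 0` as well. -/
noncomputable def weightedLaplacian (w : 𝕜 → 𝕜 → 𝕜) (ρ z : 𝕜) : 𝕜 :=
  ρ * (partialFst (partialFst w) ρ z + partialSnd (partialSnd w) ρ z) + partialFst w ρ z

theorem weightedLaplacian_eq_zero_iff (hρ : ρ ≠ 0) :
    weightedLaplacian w ρ z = 0 ↔
      partialFst (partialFst w) ρ z + ρ⁻¹ * partialFst w ρ z
        + partialSnd (partialSnd w) ρ z = 0 := by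
  have factor : weightedLaplacian w ρ z = ρ * (partialFst (partialFst w) ρ z
      + ρ⁻¹ * partialFst w ρ z + partialSnd (partialSnd w) ρ z) := by
    unfold weightedLaplacian
    field_simp
    ring
  rw [factor, mul_eq_zero_iff_left hρ]

/-- The `dρ` component of the stress 1-form of `u` and `v`, symmetric and bilinear in them, whose
diagonal `u = v` is `ρ (u_ρ² - u_z²) dρ + 2 ρ u_ρ u_z dz`. -/
noncomputable def stressRho (u v : 𝕜 → 𝕜 → 𝕜) (ρ z : 𝕜) : 𝕜 :=
  ρ * (partialFst u ρ z * partialFst v ρ z - partialSnd u ρ z * partialSnd v ρ z)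

/-- The `dz` component of the stress 1-form of `u` and `v`, the companion of `stressRho`. -/
noncomputable def stressZ (u v : 𝕜 → 𝕜 → 𝕜) (ρ z : 𝕜) : 𝕜 :=
  ρ * (partialFst u ρ z * partialSnd v ρ z + partialSnd u ρ z * partialFst v ρ z)

theorem hasDerivAt_stressRho (hu : ContDiffAt 𝕜 2 (uncurry u) (ρ, z))
    (hv : ContDiffAt 𝕜 2 (uncurry v) (ρ, z)) :
    HasDerivAt (fun t => stressRho u v ρ t)
      (ρ * (partialSnd (partialFst u) ρ z * partialFst v ρ z
        + partialFst u ρ z * partialSnd (partialFst v) ρ z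
        - (partialSnd (partialSnd u) ρ z * partialSnd v ρ z
          + partialSnd u ρ z * partialSnd (partialSnd v) ρ z))) z := by
  have hu₁ := hasDerivAt_partialSnd (hasFDerivAt_uncurry_partialFst hu).differentiableAt
  have hu₂ := hasDerivAt_partialSnd (hasFDerivAt_uncurry_partialSnd hu).differentiableAt
  have hv₁ := hasDerivAt_partialSnd (hasFDerivAt_uncurry_partialFst hv).differentiableAt
  have hv₂ := hasDerivAt_partialSnd (hasFDerivAt_uncurry_partialSnd hv).differentiableAt
  exact ((hu₁.mul hv₁).sub (hu₂.mul hv₂)).const_mul ρ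

theorem hasDerivAt_stressZ (hu : ContDiffAt 𝕜 2 (uncurry u) (ρ, z))
    (hv : ContDiffAt 𝕜 2 (uncurry v) (ρ, z)) :
    HasDerivAt (fun s => stressZ u v s z)
      (partialFst u ρ z * partialSnd v ρ z + partialSnd u ρ z * partialFst v ρ z
        + ρ * (partialFst (partialFst u) ρ z * partialSnd v ρ z
          + partialFst u ρ z * partialFst (partialSnd v) ρ z
          + (partialFst (partialSnd u) ρ z * partialFst v ρ z
            + partialSnd u ρ z * partialFst (partialFst v) ρ z))) ρ := by
  have hu₁ := hasDerivAt_partialFst (hasFDerivAt_uncurry_partialFst hu).differentiableAt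
  have hu₂ := hasDerivAt_partialFst (hasFDerivAt_uncurry_partialSnd hu).differentiableAt
  have hv₁ := hasDerivAt_partialFst (hasFDerivAt_uncurry_partialFst hv).differentiableAt
  have hv₂ := hasDerivAt_partialFst (hasFDerivAt_uncurry_partialSnd hv).differentiableAt
  exact ((hasDerivAt_id' ρ).mul ((hu₁.mul hv₂).add (hu₂.mul hv₁))).congr_deriv <| by
    simp only [one_mul, Pi.add_apply, Pi.mul_apply]

theorem partialSnd_stressRho_sub_partialFst_stressZ
    (hu : ContDiffAt 𝕜 (minSmoothness 𝕜 2) (uncurry u) (ρ, z))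
    (hv : ContDiffAt 𝕜 (minSmoothness 𝕜 2) (uncurry v) (ρ, z)) :
    partialSnd (stressRho u v) ρ z - partialFst (stressZ u v) ρ z =
      -(partialSnd v ρ z * weightedLaplacian u ρ z
        + partialSnd u ρ z * weightedLaplacian v ρ z) := by
  have hu₂ := hu.of_le le_minSmoothness
  have hv₂ := hv.of_le le_minSmoothness
  have hRho : partialSnd (stressRho u v) ρ z = _ := (hasDerivAt_stressRho hu₂ hv₂).deriv
  have hZ : partialFst (stressZ u v) ρ z = _ := (hasDerivAt_stressZ hu₂ hv₂).deriv
  rw [hRho, hZ, partialSnd_partialFst_comm hu, partialSnd_partialFst_comm hv]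
  unfold weightedLaplacian
  ring

/-- The coefficient `P` of `dρ` in the 1-form whose primitive is the conformal factor `α`. -/
noncomputable def quadratureRho (u v : 𝕜 → 𝕜 → 𝕜) (ρ z : 𝕜) : 𝕜 :=
  ρ / 4 * (partialFst u ρ z ^ 2 - partialSnd u ρ z ^ 2
      + partialFst v ρ z ^ 2 - partialSnd v ρ z ^ 2
      + partialFst u ρ z * partialFst v ρ z - partialSnd u ρ z * partialSnd v ρ z)
    - 1 / 2 * (partialFst u ρ z + partialFst v ρ z)

/-- The coefficient `Q` of `dz` in the 1-form whose primitive is the conformal factor `α`. -/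
noncomputable def quadratureZ (u v : 𝕜 → 𝕜 → 𝕜) (ρ z : 𝕜) : 𝕜 :=
  ρ / 4 * (2 * partialFst u ρ z * partialSnd u ρ z + 2 * partialFst v ρ z * partialSnd v ρ z
      + partialFst u ρ z * partialSnd v ρ z + partialSnd u ρ z * partialFst v ρ z)
    - 1 / 2 * (partialSnd u ρ z + partialSnd v ρ z)

theorem quadratureRho_eq_stressRho :
    quadratureRho u v ρ z =
      1 / 4 * (stressRho u u ρ z + stressRho v v ρ z + stressRho u v ρ z)
        - 1 / 2 * (partialFst u ρ z + partialFst v ρ z) := by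
  unfold quadratureRho stressRho
  ring

theorem quadratureZ_eq_stressZ :
    quadratureZ u v ρ z =
      1 / 4 * (stressZ u u ρ z + stressZ v v ρ z + stressZ u v ρ z)
        - 1 / 2 * (partialSnd u ρ z + partialSnd v ρ z) := by
  unfold quadratureZ stressZ
  ring

theorem partialSnd_quadratureRho (hu : ContDiffAt 𝕜 2 (uncurry u) (ρ, z))
    (hv : ContDiffAt 𝕜 2 (uncurry v) (ρ, z)) :
    partialSnd (quadratureRho u v) ρ z =
      1 / 4 * (partialSnd (stressRho u u) ρ z + partialSnd (stressRho v v) ρ z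
          + partialSnd (stressRho u v) ρ z)
        - 1 / 2 * (partialSnd (partialFst u) ρ z + partialSnd (partialFst v) ρ z) := by
  have huu := (hasDerivAt_stressRho hu hu).differentiableAt.hasDerivAt
  have hvv := (hasDerivAt_stressRho hv hv).differentiableAt.hasDerivAt
  have huv := (hasDerivAt_stressRho hu hv).differentiableAt.hasDerivAt
  have hu₁ := hasDerivAt_partialSnd (hasFDerivAt_uncurry_partialFst hu).differentiableAt
  have hv₁ := hasDerivAt_partialSnd (hasFDerivAt_uncurry_partialFst hv).differentiableAt
  simp only [partialSnd, quadratureRho_eq_stressRho]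
  exact ((((huu.add hvv).add huv).const_mul (1 / 4)).sub
    ((hu₁.add hv₁).const_mul (1 / 2))).deriv

theorem partialFst_quadratureZ (hu : ContDiffAt 𝕜 2 (uncurry u) (ρ, z))
    (hv : ContDiffAt 𝕜 2 (uncurry v) (ρ, z)) :
    partialFst (quadratureZ u v) ρ z =
      1 / 4 * (partialFst (stressZ u u) ρ z + partialFst (stressZ v v) ρ z
          + partialFst (stressZ u v) ρ z)
        - 1 / 2 * (partialFst (partialSnd u) ρ z + partialFst (partialSnd v) ρ z) := by
  have huu := (hasDerivAt_stressZ hu hu).differentiableAt.hasDerivAt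
  have hvv := (hasDerivAt_stressZ hv hv).differentiableAt.hasDerivAt
  have huv := (hasDerivAt_stressZ hu hv).differentiableAt.hasDerivAt
  have hu₂ := hasDerivAt_partialFst (hasFDerivAt_uncurry_partialSnd hu).differentiableAt
  have hv₂ := hasDerivAt_partialFst (hasFDerivAt_uncurry_partialSnd hv).differentiableAt
  simp only [partialFst, quadratureZ_eq_stressZ]
  exact ((((huu.add hvv).add huv).const_mul (1 / 4)).sub
    ((hu₂.add hv₂).const_mul (1 / 2))).deriv

theorem partialSnd_quadratureRho_sub_partialFst_quadratureZ
    (hu : ContDiffAt 𝕜 (minSmoothness 𝕜 2) (uncurry u) (ρ, z))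
    (hv : ContDiffAt 𝕜 (minSmoothness 𝕜 2) (uncurry v) (ρ, z)) :
    partialSnd (quadratureRho u v) ρ z - partialFst (quadratureZ u v) ρ z =
      -(1 / 4) * ((2 * partialSnd u ρ z + partialSnd v ρ z) * weightedLaplacian u ρ z
          + (2 * partialSnd v ρ z + partialSnd u ρ z) * weightedLaplacian v ρ z) := by
  have hu₂ := hu.of_le le_minSmoothness
  have hv₂ := hv.of_le le_minSmoothness
  rw [partialSnd_quadratureRho hu₂ hv₂, partialFst_quadratureZ hu₂ hv₂,
    partialSnd_partialFst_comm hu, partialSnd_partialFst_comm hv]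
  linear_combination (1 / 4) * partialSnd_stressRho_sub_partialFst_stressZ hu hu
    + (1 / 4) * partialSnd_stressRho_sub_partialFst_stressZ hv hv
    + (1 / 4) * partialSnd_stressRho_sub_partialFst_stressZ hu hv

end Quadrature

theorem quadrature_one_form_closed_general {𝕜 : Type*} [RCLike 𝕜] {u v : 𝕜 → 𝕜 → 𝕜} {ρ z : 𝕜}
    (hu_smooth : ContDiffAt 𝕜 2 (uncurry u) (ρ, z))
    (hv_smooth : ContDiffAt 𝕜 2 (uncurry v) (ρ, z))
    (hu_harm : weightedLaplacian u ρ z = 0) (hv_harm : weightedLaplacian v ρ z = 0) :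
    partialSnd (quadratureRho u v) ρ z = partialFst (quadratureZ u v) ρ z := by
  rw [← minSmoothness_of_isRCLikeNormedField (𝕜 := 𝕜) (n := 2)] at hu_smooth hv_smooth
  rw [← sub_eq_zero, partialSnd_quadratureRho_sub_partialFst_quadratureZ hu_smooth hv_smooth,
    hu_harm, hv_harm]
  ring

/-- The integrability condition for the quadrature determining the conformal factor `α`:
for harmonic (axisymmetric) `u`, `v`, the 1-form `P dρ + Q dz` is closed. -/
theorem quadrature_one_form_closed
    (Ω : Set (ℝ × ℝ)) (hΩ : IsOpen Ω) (hΩH : Ω ⊆ {p : ℝ × ℝ | 0 < p.1})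
    (u v : ℝ → ℝ → ℝ)
    (hu_smooth : ContDiffOn ℝ (⊤ : ℕ∞) (fun p : ℝ × ℝ => u p.1 p.2) Ω)
    (hv_smooth : ContDiffOn ℝ (⊤ : ℕ∞) (fun p : ℝ × ℝ => v p.1 p.2) Ω)
    (hu_harm : ∀ p ∈ Ω,
      deriv (fun s => deriv (fun s' => u s' p.2) s) p.1
        + p.1⁻¹ * deriv (fun s => u s p.2) p.1
        + deriv (fun t => deriv (fun t' => u p.1 t') t) p.2 = 0)
    (hv_harm : ∀ p ∈ Ω,
      deriv (fun s => deriv (fun s' => v s' p.2) s) p.1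
        + p.1⁻¹ * deriv (fun s => v s p.2) p.1
        + deriv (fun t => deriv (fun t' => v p.1 t') t) p.2 = 0)
    (P Q : ℝ → ℝ → ℝ)
    (hP : ∀ ρ z : ℝ, P ρ z =
      ρ / 4 * ((deriv (fun s => u s z) ρ) ^ 2 - (deriv (fun t => u ρ t) z) ^ 2
        + (deriv (fun s => v s z) ρ) ^ 2 - (deriv (fun t => v ρ t) z) ^ 2
        + deriv (fun s => u s z) ρ * deriv (fun s => v s z) ρ
        - deriv (fun t => u ρ t) z * deriv (fun t => v ρ t) z)
      - 1 / 2 * (deriv (fun s => u s z) ρ + deriv (fun s => v s z) ρ))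
    (hQ : ∀ ρ z : ℝ, Q ρ z =
      ρ / 4 * (2 * deriv (fun s => u s z) ρ * deriv (fun t => u ρ t) z
        + 2 * deriv (fun s => v s z) ρ * deriv (fun t => v ρ t) z
        + deriv (fun s => u s z) ρ * deriv (fun t => v ρ t) z
        + deriv (fun t => u ρ t) z * deriv (fun s => v s z) ρ)
      - 1 / 2 * (deriv (fun t => u ρ t) z + deriv (fun t => v ρ t) z)) :
    ∀ p ∈ Ω, deriv (fun t => P p.1 t) p.2 = deriv (fun s => Q s p.2) p.1 := by
  obtain rfl : P = quadratureRho u v := funext₂ hP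
  obtain rfl : Q = quadratureZ u v := funext₂ hQ
  have two_le_infty : (2 : WithTop ℕ∞) ≤ (⊤ : ℕ∞) := by norm_cast
  intro p hp
  have hρ : p.1 ≠ 0 := (hΩH hp).ne'
  exact quadrature_one_form_closed_general
    ((hu_smooth.contDiffAt (hΩ.mem_nhds hp)).of_le two_le_infty)
    ((hv_smooth.contDiffAt (hΩ.mem_nhds hp)).of_le two_le_infty)
    ((weightedLaplacian_eq_zero_iff hρ).2 (hu_harm p hp))
    ((weightedLaplacian_eq_zero_iff hρ).2 (hv_harm p hp))
end

section
/- Let L>0, let c be a real constant, and let u, v be C¹ functions on the half-plane H = {(ρ,z) : ρ>0} that are 2L-periodic in z (u(ρ,z+2L)=u(ρ,z), v(ρ,z+2L)=v(ρ,z)) and satisfy the reflection relation u(ρ,z) − v(ρ,−z) = c for all ρ>0, z∈ℝ. Define Q(ρ,z) = (ρ/4)[ 2 ∂_ρu ∂_zu + 2 ∂_ρv ∂_zv + ∂_ρu ∂_zv + ∂_zu ∂_ρv ] − (1/2)(∂_zu + ∂_zv). Then for every ρ>0, ∫_{−L}^{L} Q(ρ,z) dz = 0. -/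
open Filter Topology intervalIntegral

/-! Differentiating the reflection relation gives `∂_ρ u(ρ,z) = ∂_ρ v(ρ,-z)` and
`∂_z u(ρ,z) = -∂_z v(ρ,-z)`. The reflection `z ↦ -z` thus exchanges the two fibre exponents up to
the sign of their `z`-derivatives; since `Q` is symmetric in the pair `(u, v)` and every term of it
contains exactly one `z`-derivative, `Q` is odd in `z`. -/

theorem integral_eq_zero_of_odd {E : Type*} [NormedAddCommGroup E] [NormedSpace ℝ E]
    {f : ℝ → E} (hf : Function.Odd f) (a : ℝ) : ∫ x in (-a)..a, f x = 0 := by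
  have h_neg : ∫ x in (-a)..a, f x = -∫ x in (-a)..a, f x := by
    calc ∫ x in (-a)..a, f x = ∫ x in (-a)..a, f (-x) := by rw [integral_comp_neg, neg_neg]
      _ = ∫ x in (-a)..a, -f x := by simp only [hf _]
      _ = -∫ x in (-a)..a, f x := integral_neg
  have : IsAddTorsionFree E := .of_isTorsionFree ℝ E
  exact self_eq_neg.mp h_neg

section PartialDerivatives

variable {𝕜 E F : Type*} [NontriviallyNormedField 𝕜] [NormedAddCommGroup E] [NormedSpace 𝕜 E]
  [NormedAddCommGroup F] [NormedSpace 𝕜 F]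

theorem deriv_eq_of_eventually_sub_eq_const {f g : 𝕜 → F} {c : F} {a : 𝕜}
    (h : ∀ᶠ x in 𝓝 a, f x - g x = c) : deriv f a = deriv g a := by
  have hfg : f =ᶠ[𝓝 a] fun x => g x + c := h.mono fun _ hx => sub_eq_iff_eq_add'.mp hx
  rw [hfg.deriv_eq, deriv_add_const]

theorem deriv_eq_neg_deriv_of_eventually_sub_comp_neg_eq_const {f g : 𝕜 → F} {c : F} {a : 𝕜}
    (h : ∀ᶠ x in 𝓝 a, f x - g (-x) = c) : deriv f a = -deriv g (-a) :=
  (deriv_eq_of_eventually_sub_eq_const h).trans (deriv_comp_neg g a)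

theorem continuousOn_deriv_fst_of_contDiffOn {f : 𝕜 → E → F} {U : Set (𝕜 × E)} (hU : IsOpen U)
    (hf : ContDiffOn 𝕜 1 (fun p : 𝕜 × E => f p.1 p.2) U) :
    ContinuousOn (fun p : 𝕜 × E => deriv (fun s => f s p.2) p.1) U := by
  refine ((hf.continuousOn_fderiv_of_isOpen hU le_rfl).clm_apply
    (continuousOn_const (c := ((1, 0) : 𝕜 × E)))).congr fun p hp => ?_
  have hfp := (hf.differentiableOn one_ne_zero).differentiableAt (hU.mem_nhds hp)
  exact (hfp.hasFDerivAt.comp_hasDerivAt p.1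
    ((hasDerivAt_id p.1).prodMk (hasDerivAt_const p.1 p.2))).deriv

theorem continuousOn_deriv_snd_of_contDiffOn {f : E → 𝕜 → F} {U : Set (E × 𝕜)} (hU : IsOpen U)
    (hf : ContDiffOn 𝕜 1 (fun p : E × 𝕜 => f p.1 p.2) U) :
    ContinuousOn (fun p : E × 𝕜 => deriv (fun t => f p.1 t) p.2) U := by
  refine ((hf.continuousOn_fderiv_of_isOpen hU le_rfl).clm_apply
    (continuousOn_const (c := ((0, 1) : E × 𝕜)))).congr fun p hp => ?_
  have hfp := (hf.differentiableOn one_ne_zero).differentiableAt (hU.mem_nhds hp)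
  exact (hfp.hasFDerivAt.comp_hasDerivAt p.2
    ((hasDerivAt_const p.2 p.1).prodMk (hasDerivAt_id p.2))).deriv

end PartialDerivatives

/-- The expression `Q(ρ, z)` in the quadrature `∂_z α = Q` for the conformal factor `α` of the
vacuum metric with torus fibre metric `diag(e^u, e^v)`; the partial derivatives are those of the
one-variable slices of `u` and `v`. -/
noncomputable def quadratureQ (u v : ℝ → ℝ → ℝ) (ρ z : ℝ) : ℝ :=
  ρ / 4 * (2 * deriv (fun s => u s z) ρ * deriv (fun t => u ρ t) z
    + 2 * deriv (fun s => v s z) ρ * deriv (fun t => v ρ t) z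
    + deriv (fun s => u s z) ρ * deriv (fun t => v ρ t) z
    + deriv (fun t => u ρ t) z * deriv (fun s => v s z) ρ)
  - 1 / 2 * (deriv (fun t => u ρ t) z + deriv (fun t => v ρ t) z)

section Reflection

variable {u v : ℝ → ℝ → ℝ} {I : Set ℝ} {c ρ : ℝ}

theorem quadratureQ_odd_of_reflection (h_refl : ∀ s z, s ∈ I → u s z - v s (-z) = c)
    (hI : I ∈ 𝓝 ρ) : Function.Odd (quadratureQ u v ρ) := by
  have hρ_deriv (z : ℝ) : deriv (fun s => u s z) ρ = deriv (fun s => v s (-z)) ρ :=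
    deriv_eq_of_eventually_sub_eq_const (mem_of_superset hI fun s hs => h_refl s z hs)
  have hz_deriv (z : ℝ) : deriv (fun t => u ρ t) z = -deriv (fun t => v ρ t) (-z) :=
    deriv_eq_neg_deriv_of_eventually_sub_comp_neg_eq_const
      (.of_forall fun t => h_refl ρ t (mem_of_mem_nhds hI))
  intro z
  simp only [quadratureQ, hρ_deriv, hz_deriv, neg_neg]
  ring

theorem contDiffOn_of_reflection {n : WithTop ℕ∞}
    (hu : ContDiffOn ℝ n (fun p : ℝ × ℝ => u p.1 p.2) {p : ℝ × ℝ | p.1 ∈ I})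
    (h_refl : ∀ s z, s ∈ I → u s z - v s (-z) = c) :
    ContDiffOn ℝ n (fun p : ℝ × ℝ => v p.1 p.2) {p : ℝ × ℝ | p.1 ∈ I} := by
  have h_flip : ContDiff ℝ n fun p : ℝ × ℝ => (p.1, -p.2) := contDiff_fst.prodMk contDiff_snd.neg
  refine ((hu.comp h_flip.contDiffOn fun p hp => hp).sub (contDiffOn_const (c := c))).congr
    fun p hp => ?_
  have h : u p.1 (-p.2) - v p.1 p.2 = c := by simpa only [neg_neg] using h_refl p.1 (-p.2) hp
  exact (sub_eq_of_eq_add (sub_eq_iff_eq_add'.mp h)).symm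

theorem continuous_quadratureQ (hI : IsOpen I)
    (hu : ContDiffOn ℝ 1 (fun p : ℝ × ℝ => u p.1 p.2) {p : ℝ × ℝ | p.1 ∈ I})
    (hv : ContDiffOn ℝ 1 (fun p : ℝ × ℝ => v p.1 p.2) {p : ℝ × ℝ | p.1 ∈ I}) (hρ : ρ ∈ I) :
    Continuous (quadratureQ u v ρ) := by
  have hU : IsOpen {p : ℝ × ℝ | p.1 ∈ I} := hI.preimage continuous_fst
  have h_slice : Continuous fun z : ℝ => (ρ, z) := .prodMk_right ρ
  have hu_ρ := (continuousOn_deriv_fst_of_contDiffOn hU hu).comp_continuous h_slice fun _ => hρ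
  have hu_z := (continuousOn_deriv_snd_of_contDiffOn hU hu).comp_continuous h_slice fun _ => hρ
  have hv_ρ := (continuousOn_deriv_fst_of_contDiffOn hU hv).comp_continuous h_slice fun _ => hρ
  have hv_z := (continuousOn_deriv_snd_of_contDiffOn hU hv).comp_continuous h_slice fun _ => hρ
  unfold quadratureQ
  fun_prop

theorem quadrature_Q_integral_vanishes_reflection_general (hI : IsOpen I)
    (hu : ContDiffOn ℝ 1 (fun p : ℝ × ℝ => u p.1 p.2) {p : ℝ × ℝ | p.1 ∈ I})
    (h_refl : ∀ s z, s ∈ I → u s z - v s (-z) = c) (hρ : ρ ∈ I) (a : ℝ) :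
    IntervalIntegrable (quadratureQ u v ρ) MeasureTheory.volume (-a) a ∧
      ∫ z in (-a)..a, quadratureQ u v ρ z = 0 :=
  ⟨(continuous_quadratureQ hI hu (contDiffOn_of_reflection hu h_refl) hρ).intervalIntegrable _ _,
    integral_eq_zero_of_odd (quadratureQ_odd_of_reflection h_refl (hI.mem_nhds hρ)) a⟩

end Reflection

/-- For `2L`-periodic `u`, `v` related by the reflection identity `u(ρ,z) − v(ρ,−z) = c`,
the integral of the quadrature integrand `Q` over a period vanishes; this balances the
string of spherical black holes. -/
theorem quadrature_Q_integral_vanishes_reflection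
    (L c : ℝ) (hL : 0 < L)
    (u v : ℝ → ℝ → ℝ)
    (hu_C1 : ContDiffOn ℝ 1 (fun p : ℝ × ℝ => u p.1 p.2) {p : ℝ × ℝ | 0 < p.1})
    (hv_C1 : ContDiffOn ℝ 1 (fun p : ℝ × ℝ => v p.1 p.2) {p : ℝ × ℝ | 0 < p.1})
    (hu_per : ∀ ρ z : ℝ, 0 < ρ → u ρ (z + 2 * L) = u ρ z)
    (hv_per : ∀ ρ z : ℝ, 0 < ρ → v ρ (z + 2 * L) = v ρ z)
    (h_refl : ∀ ρ z : ℝ, 0 < ρ → u ρ z - v ρ (-z) = c)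
    (Q : ℝ → ℝ → ℝ)
    (hQ : ∀ ρ z : ℝ, Q ρ z =
      ρ / 4 * (2 * deriv (fun s => u s z) ρ * deriv (fun t => u ρ t) z
        + 2 * deriv (fun s => v s z) ρ * deriv (fun t => v ρ t) z
        + deriv (fun s => u s z) ρ * deriv (fun t => v ρ t) z
        + deriv (fun t => u ρ t) z * deriv (fun s => v s z) ρ)
      - 1 / 2 * (deriv (fun t => u ρ t) z + deriv (fun t => v ρ t) z)) :
    ∀ ρ : ℝ, 0 < ρ → (∫ z in (-L)..L, Q ρ z) = 0 := by
  obtain rfl : Q = quadratureQ u v := funext₂ hQ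
  exact fun ρ hρ =>
    (quadrature_Q_integral_vanishes_reflection_general isOpen_Ioi hu_C1 h_refl hρ L).2
end

section
/- Let A, B ∈ ℝ and let C ∈ ℝ satisfy 4C = A² + B² + AB − 2(A+B). Then C + 1 > 0, and the four Kasner exponents p₁ = C/(C+1), p₂ = (2−A−B)/(2(C+1)), p₃ = A/(2(C+1)), p₄ = B/(2(C+1)) satisfy the Kasner conditions p₁ + p₂ + p₃ + p₄ = 1 and p₁² + p₂² + p₃² + p₄² = 1. -/
/-!
As `ρ → ∞` the coefficients of `dz²`, `dt²`, `dφ²`, `dψ²` grow like `ρ` to the power `2C`, `2b₀`,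
`2b₁`, `2b₂` with `b = ((2 - A - B)/2, A/2, B/2)`, and passing to `τ = ρ^{C+1}` divides all these
rates by `C + 1`. In terms of `b` the Kasner conditions become `∑ bᵢ = 1`, which holds identically,
and `∑ bᵢ² = (C + 1)² - C² = 1 + 2C`, which is the relation between `A`, `B` and `C`. The latter
also gives `1 + 2C ≥ 0`, hence `C + 1 > 0`.
-/

/-- The Kasner conditions on a family of exponents. They characterize the vacuum metrics of the
form `±dτ² + ∑ ±τ^(2 * p i) dxᵢ²`, so `p i` is half the power of `τ` in the metric coefficient. -/
def IsKasner {ι K : Type*} [Fintype ι] [Semiring K] (p : ι → K) : Prop :=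
  ∑ i, p i = 1 ∧ ∑ i, p i ^ 2 = 1

/-- The growth rates of the Killing directions `t`, `φ`, `ψ`, in this order: half the powers of `ρ`
in the corresponding metric coefficients, where `u ∼ A log ρ` and `v ∼ B log ρ`. -/
def killingRates {K : Type*} [Field K] (A B : K) : Fin 3 → K :=
  ![(2 - A - B) / 2, A / 2, B / 2]

section Field

variable {K : Type*} [Field K]

theorem isKasner_vecCons_div_iff {n : ℕ} (b : Fin n → K) {C : K} (hC : C + 1 ≠ 0) :
    IsKasner (Matrix.vecCons (C / (C + 1)) fun i ↦ b i / (C + 1)) ↔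
      ∑ i, b i = 1 ∧ ∑ i, b i ^ 2 = 1 + 2 * C := by
  have expand_sq : (C + 1) ^ 2 = C ^ 2 + (1 + 2 * C) := by ring
  simp only [IsKasner, Fin.sum_univ_succ, Matrix.cons_val_zero, Matrix.cons_val_succ, div_pow,
    ← Finset.sum_div, ← add_div, div_eq_one_iff_eq hC, div_eq_one_iff_eq (pow_ne_zero 2 hC)]
  rw [expand_sq, add_right_inj, add_right_inj]

variable [NeZero (2 : K)]

theorem sum_killingRates (A B : K) : ∑ i, killingRates A B i = 1 := by
  simp only [killingRates, Fin.sum_univ_three, Matrix.cons_val]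
  field_simp
  ring

theorem sum_killingRates_sq (A B : K) :
    ∑ i, killingRates A B i ^ 2 = 1 + (A ^ 2 + B ^ 2 + A * B - 2 * (A + B)) / 2 := by
  simp only [killingRates, Fin.sum_univ_three, Matrix.cons_val]
  field_simp
  ring

end Field

section OrderedField

variable {K : Type*} [Field K] [LinearOrder K] [IsStrictOrderedRing K]

theorem add_one_pos_of_sum_sq_eq {ι : Type*} {s : Finset ι} {b : ι → K} {C : K}
    (h : ∑ i ∈ s, b i ^ 2 = 1 + 2 * C) : 0 < C + 1 := by
  have sum_sq_nonneg : 0 ≤ ∑ i ∈ s, b i ^ 2 := Finset.sum_nonneg fun i _ ↦ sq_nonneg (b i)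
  linarith

theorem kasner_conditions_general (A B C : K)
    (hC : 4 * C = A ^ 2 + B ^ 2 + A * B - 2 * (A + B)) :
    0 < C + 1 ∧
      C / (C + 1) + (2 - A - B) / (2 * (C + 1)) + A / (2 * (C + 1)) + B / (2 * (C + 1)) = 1 ∧
      (C / (C + 1)) ^ 2 + ((2 - A - B) / (2 * (C + 1))) ^ 2 + (A / (2 * (C + 1))) ^ 2
        + (B / (2 * (C + 1))) ^ 2 = 1 := by
  have sum_sq : ∑ i, killingRates A B i ^ 2 = 1 + 2 * C := by
    rw [sum_killingRates_sq, ← hC]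
    ring
  have C_add_one_pos : 0 < C + 1 := add_one_pos_of_sum_sq_eq sum_sq
  have kasner : IsKasner (Matrix.vecCons (C / (C + 1)) fun i ↦ killingRates A B i / (C + 1)) :=
    (isKasner_vecCons_div_iff _ C_add_one_pos.ne').2 ⟨sum_killingRates A B, sum_sq⟩
  refine ⟨C_add_one_pos, ?_⟩
  simpa [IsKasner, killingRates, Fin.sum_univ_four, div_div] using kasner

end OrderedField

/-- The exponents produced by the substitution `τ = ρ^{C+1}` satisfy the Kasner
conditions whenever `4C = A² + B² + AB − 2(A+B)`. -/
theorem kasner_conditions (A B C : ℝ)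
    (hC : 4 * C = A ^ 2 + B ^ 2 + A * B - 2 * (A + B)) :
    0 < C + 1 ∧
      C / (C + 1) + (2 - A - B) / (2 * (C + 1)) + A / (2 * (C + 1)) + B / (2 * (C + 1)) = 1 ∧
      (C / (C + 1)) ^ 2 + ((2 - A - B) / (2 * (C + 1))) ^ 2 + (A / (2 * (C + 1))) ^ 2
        + (B / (2 * (C + 1))) ^ 2 = 1 :=
  kasner_conditions_general A B C hC
end
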